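/- Let G be a commutative group, N ≤ G a submonoid, b ∈ N, ℓ ∈ ℕ, and Ω ⊆ Z_{N,ℓ}(b) infinite. If S is a maximal element of the poset 𝒮_Ω(N,G) of Ω-admissible submonoids between N and G under ≼, then the subgroup of G generated by S is all of G: Subgroup.closure (S : Set G) = ⊤ (equivalently, ∀ g ∈ G, ∃ x ∈ S, ∃ y ∈ S, g * x = y). Consequently S is an undermonoid of G. -/

import Mathlib

/-- The set of factorizations of `b` in the submonoid `S` of the group `G`. -/
def ZSet {G : Type*} [CommGroup G] (S : Submonoid G) (b : S) :
    Set (Multiset (Associates S)) :=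
  {z | (∀ a ∈ z, Irreducible a) ∧ z.prod = Associates.mk b}

/-- The set of length-`ℓ` factorizations of `b` in `S`. -/
def ZSetLen {G : Type*} [CommGroup G] (S : Submonoid G) (b : S) (ℓ : ℕ) :
    Set (Multiset (Associates S)) :=
  {z ∈ ZSet S b | Multiset.card z = ℓ}

/-- `u` is a unit of the submonoid `S` of the group `G`: `u⁻¹ ∈ S`. -/
def IsUnitIn {G : Type*} [CommGroup G] (S : Submonoid G) (u : G) : Prop :=
  u⁻¹ ∈ S

/-- `S` is unit-reflecting over `N`. -/
def UnitReflecting {G : Type*} [CommGroup G] (N S : Submonoid G) : Prop :=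
  ∀ u ∈ S, IsUnitIn S u → ∀ x ∈ N, ∀ y ∈ N, u * y = x → u ∈ N ∧ IsUnitIn N u

/-- `S` is `Ω`-admissible over `N`: `N ≤ S`, `S` is unit-reflecting over `N`, and
every `a ∈ N` whose class in `Associates ↥N` occurs in some `z ∈ Ω` has irreducible
class in `Associates ↥S`. -/
def OmegaAdmissible {G : Type*} [CommGroup G] (N S : Submonoid G)
    (Ω : Set (Multiset (Associates N))) : Prop :=
  N ≤ S ∧ UnitReflecting N S ∧
    ∀ (a : G) (haN : a ∈ N) (haS : a ∈ S),
      (∃ z ∈ Ω, Associates.mk (⟨a, haN⟩ : N) ∈ z) →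
        Irreducible (Associates.mk (⟨a, haS⟩ : S))

/-- The survival order: `S₁ ≼ S₂` iff `S₁ ≤ S₂` and every element of `S₁` that is a
unit of `↥S₂` is a unit of `↥S₁`. -/
def Prec {G : Type*} [CommGroup G] (S₁ S₂ : Submonoid G) : Prop :=
  S₁ ≤ S₂ ∧ ∀ u ∈ S₁, IsUnitIn S₂ u → IsUnitIn S₁ u

/-!
Units and irreducible elements are squarefree. So an extension `T ≥ S` in which the squarefree
elements of `S` acquire no new factors has the same units as `S` and keeps the irreducibles of `S`
irreducible; it is admissible whenever `S` is, and `S ≼ T`.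

If `S` has a nonunit `d` and `g` lies outside the group generated by `S`, such a proper extension
is obtained by adjoining one element `h`. If no positive power of `g` lies in that group, take
`h = g`. Otherwise let `k ≥ 2` be the order of `g` modulo that group, write `g ^ k = x / y` with
`x, y ∈ S`, and take `h = g * (y * d)`. Every positive power of `h` falling into the group is a
power of `h ^ k = x * y ^ (k - 1) * d ^ k`, hence divisible by `d ^ 2` in `S`. If instead `S` is
itself a group, then so is `N`, and `G` is admissible.
-/

-- `Associates.irreducible_mk` is only available for a `CommMonoidWithZero`.
lemma irreducible_associatesMk_iff {M : Type*} [CommMonoid M] {a : M} :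
    Irreducible (Associates.mk a) ↔ Irreducible a := by
  constructor
  · intro ha
    refine ⟨fun hu => ha.not_isUnit (Associates.isUnit_mk.2 hu), fun x y hxy => ?_⟩
    simpa only [Associates.isUnit_mk] using
      ha.isUnit_or_isUnit (show Associates.mk a = Associates.mk x * Associates.mk y by
        rw [hxy, Associates.mk_mul_mk])
  · intro ha
    refine ⟨fun hu => ha.not_isUnit (Associates.isUnit_mk.1 hu), fun x y hxy => ?_⟩
    obtain ⟨x, rfl⟩ := Associates.mk_surjective x
    obtain ⟨y, rfl⟩ := Associates.mk_surjective y
    rw [Associates.mk_mul_mk, Associates.mk_eq_mk_iff_associated] at hxy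
    simpa only [Associates.isUnit_mk] using (hxy.irreducible ha).isUnit_or_isUnit rfl

section

variable {G : Type*} [CommGroup G] {N S T : Submonoid G}

lemma isUnit_iff_isUnitIn {a : S} : IsUnit a ↔ IsUnitIn S a := by
  rw [isUnit_iff_exists_inv]
  constructor
  · rintro ⟨c, hac⟩
    have hac' : (a : G) * c = 1 := congrArg Subtype.val hac
    rw [IsUnitIn, inv_eq_of_mul_eq_one_right hac']
    exact c.2
  · intro ha
    exact ⟨⟨(a : G)⁻¹, ha⟩, Subtype.ext (mul_inv_cancel _)⟩

lemma isUnitIn_of_squarefree_of_div_sq_mem {a : S} (ha : Squarefree a) {d : G} (hd : d ∈ S)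
    (had : (a : G) / d ^ 2 ∈ S) : IsUnitIn S d := by
  refine isUnit_iff_isUnitIn.1 (ha ⟨d, hd⟩ ⟨⟨(a : G) / d ^ 2, had⟩, Subtype.ext ?_⟩)
  simp [← sq]

/-- Squarefree elements of the submonoid `S` acquire no new factors in `T`: both factors of any
factorization in `T` of a squarefree element of `S` lie in `S`. The containment `S ≤ T` is not part
of the definition. -/
def ReflectsSquarefreeFactors (S T : Submonoid G) : Prop :=
  ∀ u ∈ T, ∀ v ∈ T, ∀ huv : u * v ∈ S, Squarefree (⟨u * v, huv⟩ : S) → u ∈ S ∧ v ∈ S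

namespace ReflectsSquarefreeFactors

lemma mem_and_isUnitIn (hST : ReflectsSquarefreeFactors S T) {u : G} (hu : u ∈ T)
    (hunit : IsUnitIn T u) : u ∈ S ∧ IsUnitIn S u := by
  have hmem : u * u⁻¹ ∈ S := by simp
  have hone : (⟨u * u⁻¹, hmem⟩ : S) = 1 := Subtype.ext (mul_inv_cancel u)
  exact hST u hu u⁻¹ hunit hmem (hone ▸ squarefree_one)

lemma prec (hST : ReflectsSquarefreeFactors S T) (hle : S ≤ T) : Prec S T :=
  ⟨hle, fun _ hu hunit => (hST.mem_and_isUnitIn (hle hu) hunit).2⟩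

lemma unitReflecting (hST : ReflectsSquarefreeFactors S T) (hNS : UnitReflecting N S) :
    UnitReflecting N T := fun u hu hunit =>
  have ⟨huS, hunitS⟩ := hST.mem_and_isUnitIn hu hunit
  hNS u huS hunitS

lemma irreducible_inclusion (hST : ReflectsSquarefreeFactors S T) (hle : S ≤ T) {a : S}
    (ha : Irreducible a) : Irreducible (Submonoid.inclusion hle a) := by
  refine ⟨fun hunit => ha.not_isUnit ?_, fun x y hxy => ?_⟩
  · exact isUnit_iff_isUnitIn.2
      (hST.mem_and_isUnitIn (hle a.2) (isUnit_iff_isUnitIn.1 hunit)).2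
  · have hval : (a : G) = x * y := congrArg Subtype.val hxy
    have hmem : (x * y : G) ∈ S := hval ▸ a.2
    have hsq : Squarefree (⟨x * y, hmem⟩ : S) :=
      (Subtype.ext hval : a = ⟨x * y, hmem⟩) ▸ ha.squarefree
    obtain ⟨hxS, hyS⟩ := hST x x.2 y y.2 hmem hsq
    exact (ha.isUnit_or_isUnit (a := ⟨x, hxS⟩) (b := ⟨y, hyS⟩) (Subtype.ext hval)).imp
      (fun hx => hx.map (Submonoid.inclusion hle)) (fun hy => hy.map (Submonoid.inclusion hle))

lemma omegaAdmissible (hST : ReflectsSquarefreeFactors S T) (hle : S ≤ T)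
    {Ω : Set (Multiset (Associates N))} (hadm : OmegaAdmissible N S Ω) :
    OmegaAdmissible N T Ω := by
  obtain ⟨hNS, hreflect, hirr⟩ := hadm
  refine ⟨hNS.trans hle, hST.unitReflecting hreflect, fun a haN _ haΩ => ?_⟩
  exact irreducible_associatesMk_iff.2 <| hST.irreducible_inclusion hle <|
    irreducible_associatesMk_iff.1 (hirr a haN (hNS haN) haΩ)

end ReflectsSquarefreeFactors

lemma mem_closure_submonoid_iff {g : G} :
    g ∈ Subgroup.closure (S : Set G) ↔ ∃ x ∈ S, ∃ y ∈ S, g * x = y := by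
  rw [← Subgroup.mem_toSubmonoid, Subgroup.closure_toSubmonoid, Submonoid.closure_union,
    Submonoid.closure_inv, Submonoid.closure_eq, Submonoid.mem_sup]
  constructor
  · rintro ⟨y, hy, x, hx, rfl⟩
    exact ⟨x⁻¹, hx, y, hy, mul_inv_cancel_right y x⟩
  · rintro ⟨x, hx, y, hy, rfl⟩
    exact ⟨g * x, hy, x⁻¹, by simpa using hx, mul_inv_cancel_right g x⟩

lemma reflectsSquarefreeFactors_sup_powers {d h : G} (hd : d ∈ S) (hdunit : ¬ IsUnitIn S d)
    (hpow : ∀ n ≠ 0, h ^ n ∈ Subgroup.closure (S : Set G) → h ^ n / d ^ 2 ∈ S) :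
    ReflectsSquarefreeFactors S (S ⊔ Submonoid.powers h) := by
  intro u hu v hv huv hsq
  obtain ⟨s, hs, _, ⟨m, rfl⟩, rfl⟩ := Submonoid.mem_sup.1 hu
  obtain ⟨t, ht, _, ⟨n, rfl⟩, rfl⟩ := Submonoid.mem_sup.1 hv
  have hprod : s * h ^ m * (t * h ^ n) = h ^ (m + n) * (s * t) := by
    rw [mul_mul_mul_comm, ← pow_add, mul_comm]
  by_cases hmn : m + n = 0
  · obtain ⟨rfl, rfl⟩ := Nat.add_eq_zero_iff.1 hmn
    simpa using ⟨hs, ht⟩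
  · have hst : s * t ∈ S := S.mul_mem hs ht
    have hclosure : h ^ (m + n) ∈ Subgroup.closure (S : Set G) :=
      mem_closure_submonoid_iff.2 ⟨s * t, hst, _, huv, hprod.symm⟩
    have hdiv : s * h ^ m * (t * h ^ n) / d ^ 2 ∈ S := by
      rw [hprod, mul_div_right_comm]
      exact S.mul_mem (hpow _ hmn hclosure) hst
    exact absurd (isUnitIn_of_squarefree_of_div_sq_mem hsq hd hdiv) hdunit

lemma exists_mul_pow_div_sq_mem {d g : G} (hd : d ∈ S) {k : ℕ} (hk : 2 ≤ k)
    (hg : g ^ k ∈ Subgroup.closure (S : Set G)) : ∃ s ∈ S, (g * s) ^ k / d ^ 2 ∈ S := by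
  obtain ⟨y, hy, x, hx, hxy⟩ := mem_closure_submonoid_iff.1 hg
  obtain ⟨j, rfl⟩ := Nat.exists_eq_add_of_le' hk
  have hdiv : (g * (y * d)) ^ (j + 2) / d ^ 2 = x * y ^ (j + 1) * d ^ j := by
    rw [div_eq_iff_eq_mul, mul_pow, mul_pow, ← hxy, pow_succ' y (j + 1), pow_add d]
    simp only [mul_assoc]
  refine ⟨y * d, S.mul_mem hy hd, ?_⟩
  rw [hdiv]
  exact S.mul_mem (S.mul_mem hx (S.pow_mem hy _)) (S.pow_mem hd _)

lemma pow_mul_div_sq_mem {d h : G} (hd : d ∈ S) {k : ℕ} (hk : h ^ k / d ^ 2 ∈ S) {j : ℕ}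
    (hj : j ≠ 0) : h ^ (k * j) / d ^ 2 ∈ S := by
  obtain ⟨i, rfl⟩ := Nat.exists_eq_succ_of_ne_zero hj
  have hmem : h ^ k ∈ S := by
    simpa using S.mul_mem hk (S.pow_mem hd 2)
  rw [pow_mul, pow_succ, mul_div_assoc]
  exact S.mul_mem (S.pow_mem hmem i) hk

lemma exists_notMem_closure_forall_pow_div_sq_mem {d g : G} (hd : d ∈ S)
    (hg : g ∉ Subgroup.closure (S : Set G)) :
    ∃ h ∉ Subgroup.closure (S : Set G),
      ∀ n ≠ 0, h ^ n ∈ Subgroup.closure (S : Set G) → h ^ n / d ^ 2 ∈ S := by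
  set H := Subgroup.closure (S : Set G)
  set k := orderOf (g : G ⧸ H)
  have pow_mem_iff (n : ℕ) : g ^ n ∈ H ↔ k ∣ n := by
    rw [orderOf_dvd_iff_pow_eq_one, ← QuotientGroup.mk_pow, QuotientGroup.eq_one_iff]
  have hk_ne_one : k ≠ 1 := by
    rwa [Ne, orderOf_eq_one_iff, QuotientGroup.eq_one_iff]
  obtain hk | hk := eq_or_ne k 0
  · refine ⟨g, hg, fun n hn hgn => absurd ?_ hn⟩
    rwa [pow_mem_iff, hk, zero_dvd_iff] at hgn
  · obtain ⟨s, hs, hdiv⟩ :=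
      exists_mul_pow_div_sq_mem hd (by omega : 2 ≤ k) ((pow_mem_iff k).2 dvd_rfl)
    have hsH : s ∈ H := Subgroup.subset_closure hs
    refine ⟨g * s, by rwa [H.mul_mem_cancel_right hsH], fun n hn hpow => ?_⟩
    rw [mul_pow, H.mul_mem_cancel_right (H.pow_mem hsH n), pow_mem_iff] at hpow
    obtain ⟨j, rfl⟩ := hpow
    exact pow_mul_div_sq_mem hd hdiv (right_ne_zero_of_mul hn)

lemma omegaAdmissible_top_of_forall_isUnitIn {Ω : Set (Multiset (Associates N))}
    (hadm : OmegaAdmissible N S Ω) (hS : ∀ s ∈ S, IsUnitIn S s) : OmegaAdmissible N ⊤ Ω := by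
  obtain ⟨hNS, hreflect, hirr⟩ := hadm
  have hN (x : G) (hx : x ∈ N) : IsUnitIn N x :=
    (hreflect x (hNS hx) (hS x (hNS hx)) x hx 1 N.one_mem (mul_one x)).2
  refine ⟨le_top, fun u _ _ x hx y hy hxy => ?_, fun a haN _ haΩ => ?_⟩
  · have hu : u ∈ N := by
      rw [eq_mul_inv_of_mul_eq hxy]
      exact N.mul_mem hx (hN y hy)
    exact ⟨hu, hN u hu⟩
  · have hunit : IsUnit (⟨a, hNS haN⟩ : S) := isUnit_iff_isUnitIn.2 (hS a (hNS haN))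
    exact absurd hunit (irreducible_associatesMk_iff.1 (hirr a haN (hNS haN) haΩ)).not_isUnit

theorem maximal_is_undermonoid_general {Ω : Set (Multiset (Associates N))}
    (hadm : OmegaAdmissible N S Ω)
    (hmax : ∀ T : Submonoid G, OmegaAdmissible N T Ω → Prec S T → T = S) :
    Subgroup.closure (S : Set G) = ⊤ ∧ ∀ g : G, ∃ x ∈ S, ∃ y ∈ S, g * x = y := by
  suffices hgen : ∀ g : G, g ∈ Subgroup.closure (S : Set G) from
    ⟨(Subgroup.eq_top_iff' _).2 hgen, fun g => mem_closure_submonoid_iff.1 (hgen g)⟩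
  intro g
  by_cases hS : ∀ s ∈ S, IsUnitIn S s
  · have htop : ⊤ = S := hmax ⊤ (omegaAdmissible_top_of_forall_isUnitIn hadm hS)
      ⟨le_top, fun s hs _ => hS s hs⟩
    exact Subgroup.subset_closure (htop ▸ Submonoid.mem_top g)
  · push Not at hS
    obtain ⟨d, hd, hdunit⟩ := hS
    by_contra hg
    obtain ⟨h, hh, hpow⟩ := exists_notMem_closure_forall_pow_div_sq_mem hd hg
    have hext := reflectsSquarefreeFactors_sup_powers hd hdunit hpow
    have heq : S ⊔ Submonoid.powers h = S :=
      hmax _ (hext.omegaAdmissible le_sup_left hadm) (hext.prec le_sup_left)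
    have hhS : h ∈ S := sup_eq_left.1 heq (Submonoid.mem_powers h)
    exact hh (Subgroup.subset_closure hhS)

end

/-- A maximal element of the survival poset generates the whole group: if `S` is a
maximal element of the poset of `Ω`-admissible submonoids under `≼`, with
`Ω ⊆ Z_{N,ℓ}(b)` infinite, then the subgroup generated by `S` is all of `G`;
consequently `S` is an undermonoid of `G`. -/
theorem maximal_is_undermonoid {G : Type*} [CommGroup G] (N S : Submonoid G)
    (b : G) (hb : b ∈ N) (ℓ : ℕ) (Ω : Set (Multiset (Associates N)))
    (hΩ : Ω ⊆ ZSetLen N ⟨b, hb⟩ ℓ) (hinf : Ω.Infinite)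
    (hadm : OmegaAdmissible N S Ω)
    (hmax : ∀ T : Submonoid G, OmegaAdmissible N T Ω → Prec S T → T = S) :
    Subgroup.closure (S : Set G) = ⊤ ∧ ∀ g : G, ∃ x ∈ S, ∃ y ∈ S, g * x = y :=
  maximal_is_undermonoid_general hadm hmax
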